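/- Identity (c6) of Appendix C: Let τ lie in the complex upper half-plane and let x ∈ ℂ be such that all theta-function values appearing in denominators below are nonzero. Then S'(x,τ)·( ℘₂(x, τ/2) − ℘₂(0, τ/2) ) = S''(1/2, τ)·S'(x + 1/2, τ). -/

import Mathlib

open Complex

/-- Jacobi theta function θ₁(u,τ). -/
noncomputable def theta1 (u τ : ℂ) : ℂ :=
  -∑' k : ℤ, Complex.exp ((Real.pi : ℂ) * Complex.I * τ * ((k : ℂ) + 1/2)^2
      + 2 * (Real.pi : ℂ) * Complex.I * (u + 1/2) * ((k : ℂ) + 1/2))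

/-- Jacobi theta function θ₂(u,τ). -/
noncomputable def theta2 (u τ : ℂ) : ℂ :=
  ∑' k : ℤ, Complex.exp ((Real.pi : ℂ) * Complex.I * τ * ((k : ℂ) + 1/2)^2
      + 2 * (Real.pi : ℂ) * Complex.I * u * ((k : ℂ) + 1/2))

/-- Jacobi theta function θ₃(u,τ). -/
noncomputable def theta3 (u τ : ℂ) : ℂ :=
  ∑' k : ℤ, Complex.exp ((Real.pi : ℂ) * Complex.I * τ * (k : ℂ)^2
      + 2 * (Real.pi : ℂ) * Complex.I * u * (k : ℂ))

/-- Jacobi theta function θ₄(u,τ). -/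
noncomputable def theta4 (u τ : ℂ) : ℂ :=
  ∑' k : ℤ, Complex.exp ((Real.pi : ℂ) * Complex.I * τ * (k : ℂ)^2
      + 2 * (Real.pi : ℂ) * Complex.I * (u + 1/2) * (k : ℂ))

/-- ζ_a(u,τ) = θ_a'(u,τ)/θ_a(u,τ). -/
noncomputable def zeta1 (u τ : ℂ) : ℂ := deriv (fun v => theta1 v τ) u / theta1 u τ
noncomputable def zeta2 (u τ : ℂ) : ℂ := deriv (fun v => theta2 v τ) u / theta2 u τ
noncomputable def zeta3 (u τ : ℂ) : ℂ := deriv (fun v => theta3 v τ) u / theta3 u τ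
noncomputable def zeta4 (u τ : ℂ) : ℂ := deriv (fun v => theta4 v τ) u / theta4 u τ

/-- ℘_a(u,τ) = −∂_u ζ_a(u,τ). -/
noncomputable def wp1 (u τ : ℂ) : ℂ := -deriv (fun v => zeta1 v τ) u
noncomputable def wp2 (u τ : ℂ) : ℂ := -deriv (fun v => zeta2 v τ) u
noncomputable def wp1' (u τ : ℂ) : ℂ := deriv (fun v => wp1 v τ) u
noncomputable def wp2' (u τ : ℂ) : ℂ := deriv (fun v => wp2 v τ) u

/-- S'(u,τ) = ζ₁(u,τ) − ζ₄(u,τ). -/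
noncomputable def Sp (u τ : ℂ) : ℂ := zeta1 u τ - zeta4 u τ
/-- S''(u,τ) = ∂_u S'(u,τ). -/
noncomputable def Spp (u τ : ℂ) : ℂ := deriv (fun v => Sp v τ) u
/-- S'''(u,τ) = ∂_u S''(u,τ). -/
noncomputable def Sppp (u τ : ℂ) : ℂ := deriv (fun v => Spp v τ) u

/-- Partial derivative in the j-th coordinate of a ℂ-valued function on ℝ^N. -/
noncomputable def pdC {N : ℕ} (j : Fin N) (f : (Fin N → ℝ) → ℂ) (x : Fin N → ℝ) : ℂ :=
  fderiv ℝ f x (Pi.single j 1)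

/-- Partial derivative in the j-th coordinate of an ℝ-valued function on ℝ^d. -/
noncomputable def pd {d : ℕ} (j : Fin d) (f : (Fin d → ℝ) → ℝ) (x : Fin d → ℝ) : ℝ :=
  fderiv ℝ f x (Pi.single j 1)

/-- Auxiliary series of characteristic 1/4. -/
noncomputable def auxF (z τ : ℂ) : ℂ :=
  Complex.exp (Real.pi * I * τ / 8 + Real.pi * I * z) * jacobiTheta₂ (2 * z + τ / 2) (2 * τ)

lemma hasSum_theta2_aux (u : ℂ) {τ : ℂ} (hτ : 0 < τ.im) :
    HasSum (fun k : ℤ => Complex.exp ((Real.pi : ℂ) * Complex.I * τ * ((k : ℂ) + 1/2)^2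
      + 2 * (Real.pi : ℂ) * Complex.I * u * ((k : ℂ) + 1/2)))
      (Complex.exp (Real.pi * I * τ / 4 + Real.pi * I * u) * jacobiTheta₂ (u + τ / 2) τ) := by
  refine ((hasSum_jacobiTheta₂_term (u + τ / 2) hτ).mul_left _).congr_fun ?_
  intro k
  rw [jacobiTheta₂_term, ← Complex.exp_add]
  congr 1
  ring

lemma theta2_eq (u : ℂ) {τ : ℂ} (hτ : 0 < τ.im) :
    theta2 u τ = Complex.exp (Real.pi * I * τ / 4 + Real.pi * I * u) * jacobiTheta₂ (u + τ / 2) τ :=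
  (hasSum_theta2_aux u hτ).tsum_eq

lemma hasSum_theta2 (u : ℂ) {τ : ℂ} (hτ : 0 < τ.im) :
    HasSum (fun k : ℤ => Complex.exp ((Real.pi : ℂ) * Complex.I * τ * ((k : ℂ) + 1/2)^2
      + 2 * (Real.pi : ℂ) * Complex.I * u * ((k : ℂ) + 1/2))) (theta2 u τ) := by
  rw [theta2_eq u hτ]; exact hasSum_theta2_aux u hτ

lemma theta3_eq (u τ : ℂ) : theta3 u τ = jacobiTheta₂ u τ := by
  unfold theta3 jacobiTheta₂ jacobiTheta₂_term
  congr 1; ext k; congr 1; ring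

lemma hasSum_theta3 (u : ℂ) {τ : ℂ} (hτ : 0 < τ.im) :
    HasSum (fun k : ℤ => Complex.exp ((Real.pi : ℂ) * Complex.I * τ * (k : ℂ)^2
      + 2 * (Real.pi : ℂ) * Complex.I * u * (k : ℂ))) (theta3 u τ) := by
  rw [theta3_eq]
  refine (hasSum_jacobiTheta₂_term u hτ).congr_fun ?_
  intro k
  rw [jacobiTheta₂_term]
  congr 1
  ring

lemma hasSum_auxF (z : ℂ) {τ : ℂ} (hτ : 0 < τ.im) :
    HasSum (fun k : ℤ => Complex.exp (2 * (Real.pi : ℂ) * Complex.I * τ * ((k : ℂ) + 1/4)^2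
      + 2 * (Real.pi : ℂ) * Complex.I * z * (2 * (k : ℂ) + 1/2))) (auxF z τ) := by
  have h2 : 0 < (2 * τ).im := by simpa using hτ
  refine ((hasSum_jacobiTheta₂_term (2 * z + τ / 2) h2).mul_left _).congr_fun ?_
  intro k
  rw [jacobiTheta₂_term, ← Complex.exp_add]
  congr 1
  ring

lemma hasSum_prod {f g : ℤ → ℂ} {a b : ℂ} (hf : HasSum f a) (hg : HasSum g b) :
    HasSum (fun p : ℤ × ℤ => f p.1 * g p.2) (a * b) :=
  hf.mul hg (summable_mul_of_summable_norm hf.summable.norm hg.summable.norm)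

lemma hasSum_glue {α γ : Type*} {u : γ → ℂ} {p q : α → γ} {a b : ℂ}
    (hpq : Function.Bijective (Sum.elim p q)) (h1 : HasSum (fun i => u (p i)) a)
    (h2 : HasSum (fun i => u (q i)) b) : HasSum u (a + b) := by
  rw [← (Equiv.ofBijective _ hpq).hasSum_iff]
  exact HasSum.sum h1 h2

lemma bij1 : Function.Bijective (Sum.elim (fun a : ℤ => 2 * a) (fun a : ℤ => -2 * a - 1)) := by
  constructor
  · rintro (a | a) (b | b) h <;> simp at h ⊢ <;> omega
  · intro n
    rcases Int.even_or_odd' n with ⟨k, h | h⟩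
    · exact ⟨Sum.inl k, by simp; omega⟩
    · exact ⟨Sum.inr (-k-1), by simp; omega⟩

lemma bij2 : Function.Bijective (Sum.elim (fun p : ℤ × ℤ => (p.1 + p.2, p.1 - p.2))
    (fun p : ℤ × ℤ => (-p.1 - p.2 - 1, p.2 - p.1))) := by
  constructor
  · rintro (⟨a, a'⟩ | ⟨a, a'⟩) (⟨b, b'⟩ | ⟨b, b'⟩) h <;> simp at h ⊢ <;> omega
  · rintro ⟨m, n⟩
    rcases Int.even_or_odd' (m + n) with ⟨k, h | h⟩
    · exact ⟨Sum.inl (k, k - n), by simp; omega⟩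
    · exact ⟨Sum.inr (-k - 1, n - k - 1), by simp; omega⟩

lemma bij3 : Function.Bijective (Sum.elim (fun p : ℤ × ℤ => (p.1 + p.2, p.1 - p.2))
    (fun p : ℤ × ℤ => (p.1 + p.2, p.1 - p.2 - 1))) := by
  constructor
  · rintro (⟨a, a'⟩ | ⟨a, a'⟩) (⟨b, b'⟩ | ⟨b, b'⟩) h <;> simp at h ⊢ <;> omega
  · rintro ⟨m, n⟩
    rcases Int.even_or_odd' (m + n) with ⟨k, h | h⟩
    · exact ⟨Sum.inl (k, k - n), by simp; omega⟩
    · exact ⟨Sum.inr (k + 1, m - k - 1), by simp; omega⟩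

lemma id_E (x : ℂ) {τ : ℂ} (hτ : 0 < τ.im) :
    theta2 x (τ / 2) = auxF x τ + auxF (-x) τ := by
  have h2 : 0 < (τ / 2).im := by simpa using hτ
  refine (hasSum_theta2 x h2).unique (hasSum_glue bij1 ?_ ?_)
  · refine (hasSum_auxF x hτ).congr_fun fun k => ?_
    congr 1; push_cast; ring
  · refine (hasSum_auxF (-x) hτ).congr_fun fun k => ?_
    congr 1; push_cast; ring

lemma id_I (x y : ℂ) {τ : ℂ} (hτ : 0 < τ.im) :
    theta2 (x + y) τ * theta3 (x - y) τ = auxF x τ * auxF y τ + auxF (-x) τ * auxF (-y) τ := by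
  refine (hasSum_prod (hasSum_theta2 (x + y) hτ) (hasSum_theta3 (x - y) hτ)).unique
    (hasSum_glue bij2 ?_ ?_)
  · refine (hasSum_prod (hasSum_auxF x hτ) (hasSum_auxF y hτ)).congr_fun fun k => ?_
    rw [← Complex.exp_add, ← Complex.exp_add]
    congr 1; push_cast; ring
  · refine (hasSum_prod (hasSum_auxF (-x) hτ) (hasSum_auxF (-y) hτ)).congr_fun fun k => ?_
    rw [← Complex.exp_add, ← Complex.exp_add]
    congr 1; push_cast; ring

lemma id_II (x y : ℂ) {τ : ℂ} (hτ : 0 < τ.im) :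
    theta2 (x + y) (τ / 2) * theta2 (x - y) (τ / 2) =
      theta2 (2 * x) τ * theta3 (2 * y) τ + theta3 (2 * x) τ * theta2 (2 * y) τ := by
  have h2 : 0 < (τ / 2).im := by simpa using hτ
  refine (hasSum_prod (hasSum_theta2 (x + y) h2) (hasSum_theta2 (x - y) h2)).unique
    (hasSum_glue bij3 ?_ ?_)
  · refine (hasSum_prod (hasSum_theta2 (2 * x) hτ) (hasSum_theta3 (2 * y) hτ)).congr_fun fun k => ?_
    rw [← Complex.exp_add, ← Complex.exp_add]
    congr 1; push_cast; ring
  · refine (hasSum_prod (hasSum_theta3 (2 * x) hτ) (hasSum_theta2 (2 * y) hτ)).congr_fun fun k => ?_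
    rw [← Complex.exp_add, ← Complex.exp_add]
    congr 1; push_cast; ring

lemma diff_theta3 {τ : ℂ} (hτ : 0 < τ.im) : Differentiable ℂ (fun v => theta3 v τ) := by
  intro z
  simp_rw [theta3_eq]
  exact differentiableAt_jacobiTheta₂_fst z hτ

lemma diff_jac {τ : ℂ} (hτ : 0 < τ.im) : Differentiable ℂ (fun v => jacobiTheta₂ v τ) :=
  fun z => differentiableAt_jacobiTheta₂_fst z hτ

lemma diff_theta2 {τ : ℂ} (hτ : 0 < τ.im) : Differentiable ℂ (fun v => theta2 v τ) := by
  have : (fun v => theta2 v τ) = fun v => Complex.exp (Real.pi * I * τ / 4 + Real.pi * I * v) *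
      (fun v => jacobiTheta₂ v τ) (v + τ / 2) := by
    ext v; exact theta2_eq v hτ
  rw [this]
  have h := diff_jac hτ
  have h' : Differentiable ℂ fun v => (fun v => jacobiTheta₂ v τ) (v + τ / 2) :=
    h.comp (by fun_prop : Differentiable ℂ fun v : ℂ => v + τ / 2)
  exact Differentiable.mul (by fun_prop) h'

lemma diff_auxF {τ : ℂ} (hτ : 0 < τ.im) : Differentiable ℂ (fun v => auxF v τ) := by
  have h2 : 0 < (2 * τ).im := by simpa using hτ
  have h' : Differentiable ℂ fun v => (fun v => jacobiTheta₂ v (2 * τ)) (2 * v + τ / 2) :=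
    (diff_jac h2).comp (by fun_prop : Differentiable ℂ fun v : ℂ => 2 * v + τ / 2)
  exact Differentiable.mul (by fun_prop) h'

lemma theta2_add_one (u τ : ℂ) : theta2 (u + 1) τ = - theta2 u τ := by
  unfold theta2
  rw [← tsum_neg]
  congr 1; ext k
  rw [show (Real.pi : ℂ) * I * τ * ((k : ℂ) + 1/2)^2 + 2 * Real.pi * I * (u + 1) * ((k : ℂ) + 1/2)
    = (Real.pi * I * τ * ((k : ℂ) + 1/2)^2 + 2 * Real.pi * I * u * ((k : ℂ) + 1/2))
      + (k * (2 * Real.pi * I) + Real.pi * I) by ring, Complex.exp_add,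
      Complex.exp_add (k * (2 * Real.pi * I)), Complex.exp_int_mul_two_pi_mul_I, Complex.exp_pi_mul_I]
  ring

lemma theta3_add_one (u τ : ℂ) : theta3 (u + 1) τ = theta3 u τ := by
  simp_rw [theta3_eq, jacobiTheta₂_add_left]

lemma theta3_neg (u τ : ℂ) : theta3 (-u) τ = theta3 u τ := by
  simp_rw [theta3_eq, jacobiTheta₂_neg_left]

lemma theta2_neg (u τ : ℂ) : theta2 (-u) τ = theta2 u τ := by
  unfold theta2
  rw [← ((Equiv.subLeft (-1 : ℤ))).tsum_eq]
  congr 1; ext k; congr 1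
  simp only [Equiv.subLeft_apply]; push_cast; ring

lemma auxF_add_half (u τ : ℂ) : auxF (u + 1 / 2) τ = I * auxF u τ := by
  unfold auxF
  rw [show 2 * (u + 1 / 2) + τ / 2 = 2 * u + τ / 2 + 1 by ring, jacobiTheta₂_add_left,
    show (Real.pi : ℂ) * I * τ / 8 + Real.pi * I * (u + 1 / 2) =
      Real.pi * I * τ / 8 + Real.pi * I * u + Real.pi / 2 * I by ring, Complex.exp_add,
      Complex.exp_pi_div_two_mul_I]
  ring

lemma auxF_neg_add_half (u τ : ℂ) : auxF (-(u + 1 / 2)) τ = - I * auxF (-u) τ := by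
  have h := auxF_add_half (-(u + 1 / 2)) τ
  rw [show -(u + 1 / 2) + 1 / 2 = -u by ring] at h
  rw [h, neg_mul, ← mul_assoc, I_mul_I]; ring

lemma theta1_eq (u τ : ℂ) : theta1 u τ = - theta2 (u + 1 / 2) τ := rfl
lemma theta4_eq (u τ : ℂ) : theta4 u τ = theta3 (u + 1 / 2) τ := rfl

/-- Derivative of `f (x + y) * g (x - y)` in `y`. -/
lemma hasDerivAt_pm {f g : ℂ → ℂ} (hf : Differentiable ℂ f) (hg : Differentiable ℂ g) (x y : ℂ) :
    HasDerivAt (fun y => f (x + y) * g (x - y))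
      (deriv f (x + y) * g (x - y) - f (x + y) * deriv g (x - y)) y := by
  have h1 := HasDerivAt.comp_const_add x y (hf (x + y)).hasDerivAt
  have h2 := HasDerivAt.comp_const_sub x y (hg (x - y)).hasDerivAt
  exact (h1.mul h2).congr_deriv (by ring)

lemma hasDerivAt_two {f : ℂ → ℂ} (hf : Differentiable ℂ f) (y : ℂ) :
    HasDerivAt (fun y => f (2 * y)) (2 * deriv f (2 * y)) y := by
  have h := (hf (2 * y)).hasDerivAt.comp y ((hasDerivAt_id y).const_mul 2)
  exact h.congr_deriv (by ring)

lemma deriv_diff {f : ℂ → ℂ} (hf : Differentiable ℂ f) : Differentiable ℂ (deriv f) := by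
  have h : ContDiff ℂ 2 f := hf.contDiff
  exact (h.iterate_deriv' 1 1).differentiable (by norm_num)

lemma deriv_I (f2 f3 F : ℂ → ℂ) (h2 : Differentiable ℂ f2) (h3 : Differentiable ℂ f3)
    (hF : Differentiable ℂ F)
    (h : ∀ x y, f2 (x + y) * f3 (x - y) = F x * F y + F (-x) * F (-y)) (x : ℂ) :
    deriv f2 x * f3 x - f2 x * deriv f3 x = deriv F 0 * (F x - F (-x)) := by
  have a := hasDerivAt_pm h2 h3 x 0
  have hFn : HasDerivAt (fun y => F (-y)) (-deriv F 0) 0 := by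
    have := HasDerivAt.comp_const_sub 0 0 (by simpa using (hF 0).hasDerivAt :
      HasDerivAt F (deriv F 0) (0 - 0))
    simpa using this
  have b := ((hF 0).hasDerivAt.const_mul (F x)).add (hFn.const_mul (F (-x)))
  have e : (fun y => f2 (x + y) * f3 (x - y)) = (fun y => F x * F y + F (-x) * F (-y)) :=
    funext (h x)
  rw [e] at a
  have := a.unique b
  simp only [add_zero, sub_zero] at this
  rw [this]; ring

lemma deriv_II (f2 f3 B : ℂ → ℂ) (h2 : Differentiable ℂ f2) (h3 : Differentiable ℂ f3)
    (hB : Differentiable ℂ B)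
    (h : ∀ x y, B (x + y) * B (x - y) = f2 (2 * x) * f3 (2 * y) + f3 (2 * x) * f2 (2 * y)) (x : ℂ) :
    deriv (deriv B) x * B x - deriv B x ^ 2 =
      2 * (f2 (2 * x) * deriv (deriv f3) 0 + f3 (2 * x) * deriv (deriv f2) 0) := by
  have e : (fun y => B (x + y) * B (x - y)) =
    (fun y => f2 (2 * x) * f3 (2 * y) + f3 (2 * x) * f2 (2 * y)) := funext (h x)
  have k : ∀ y, deriv B (x + y) * B (x - y) - B (x + y) * deriv B (x - y) =
      f2 (2 * x) * (2 * deriv f3 (2 * y)) + f3 (2 * x) * (2 * deriv f2 (2 * y)) := by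
    intro y
    have a := hasDerivAt_pm hB hB x y
    rw [e] at a
    exact a.unique (((hasDerivAt_two h3 y).const_mul _).add ((hasDerivAt_two h2 y).const_mul _))
  have a := (hasDerivAt_pm (deriv_diff hB) hB x 0).sub (hasDerivAt_pm hB (deriv_diff hB) x 0)
  have b := (((hasDerivAt_two (deriv_diff h3) 0).const_mul 2).const_mul (f2 (2 * x))).add
    (((hasDerivAt_two (deriv_diff h2) 0).const_mul 2).const_mul (f3 (2 * x)))
  have a' := a.congr_of_eventuallyEq (Filter.Eventually.of_forall fun y => (k y).symm)
  have := a'.unique b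
  simp only [add_zero, sub_zero, mul_zero] at this
  linear_combination this / 2

lemma deriv_logderiv {f : ℂ → ℂ} (hf : Differentiable ℂ f) {x : ℂ} (hx : f x ≠ 0) :
    HasDerivAt (fun v => deriv f v / f v)
      ((deriv (deriv f) x * f x - deriv f x ^ 2) / f x ^ 2) x := by
  exact ((deriv_diff hf x).hasDerivAt.div (hf x).hasDerivAt hx).congr_deriv (by rw [sq (deriv f x)])

lemma deriv_even {f : ℂ → ℂ} (h : ∀ u, f (-u) = f u) : deriv f 0 = 0 := by
  have h1 : deriv (fun u => f (-u)) 0 = deriv f 0 := by congr 1; ext u; exact h u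
  rw [deriv_comp_neg] at h1
  simp only [neg_zero] at h1
  linear_combination (-1/2) * h1

lemma zeta1_eq (u τ : ℂ) : zeta1 u τ = zeta2 (u + 1 / 2) τ := by
  unfold zeta1 zeta2
  have : (fun v => theta1 v τ) = fun v => -(fun w => theta2 w τ) (v + 1 / 2) := by
    ext v; exact theta1_eq v τ
  rw [this, deriv.fun_neg, deriv_comp_add_const (fun w => theta2 w τ), theta1_eq, neg_div_neg_eq]

lemma zeta4_eq (u τ : ℂ) : zeta4 u τ = zeta3 (u + 1 / 2) τ := by
  unfold zeta4 zeta3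
  have : (fun v => theta4 v τ) = fun v => (fun w => theta3 w τ) (v + 1 / 2) := by
    ext v; exact theta4_eq v τ
  rw [this, deriv_comp_add_const (fun w => theta3 w τ), theta4_eq]

lemma zeta2_add_one (u τ : ℂ) : zeta2 (u + 1) τ = zeta2 u τ := by
  unfold zeta2
  have h : (fun v => theta2 v τ) = fun v => -(fun w => theta2 w τ) (v + 1) := by
    ext v; simp [theta2_add_one]
  have : deriv (fun v => theta2 v τ) u = - deriv (fun v => theta2 v τ) (u + 1) := by
    conv_lhs => rw [h, deriv.fun_neg, deriv_comp_add_const (fun w => theta2 w τ)]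
  rw [this, theta2_add_one, div_neg, neg_div]

lemma zeta3_add_one (u τ : ℂ) : zeta3 (u + 1) τ = zeta3 u τ := by
  unfold zeta3
  have h : (fun v => theta3 v τ) = fun v => (fun w => theta3 w τ) (v + 1) := by
    ext v; simp [theta3_add_one]
  have : deriv (fun v => theta3 v τ) u = deriv (fun v => theta3 v τ) (u + 1) := by
    conv_lhs => rw [h, deriv_comp_add_const (fun w => theta3 w τ)]
  rw [this, theta3_add_one]

lemma theta_mul (x : ℂ) {τ : ℂ} (hτ : 0 < τ.im) :
    theta2 x τ * theta3 x τ = auxF 0 τ * (auxF x τ + auxF (-x) τ) := by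
  have := id_I x 0 hτ
  simp only [add_zero, sub_zero, neg_zero] at this
  rw [this]; ring

lemma zeta_sub (x : ℂ) {τ : ℂ} (hτ : 0 < τ.im) (h2 : theta2 x τ ≠ 0) (h3 : theta3 x τ ≠ 0) :
    zeta2 x τ - zeta3 x τ = deriv (fun v => auxF v τ) 0 * (auxF x τ - auxF (-x) τ) /
      (auxF 0 τ * (auxF x τ + auxF (-x) τ)) := by
  have h := deriv_I _ _ _ (diff_theta2 hτ) (diff_theta3 hτ) (diff_auxF hτ)
    (fun x y => id_I x y hτ) x
  rw [← theta_mul x hτ, ← h, zeta2, zeta3]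
  field_simp

lemma Spp_half {τ : ℂ} (hτ : 0 < τ.im) (h2 : theta2 0 τ ≠ 0) (h3 : theta3 0 τ ≠ 0) :
    Spp (1 / 2) τ = deriv (deriv (fun v => theta2 v τ)) 0 / theta2 0 τ -
      deriv (deriv (fun v => theta3 v τ)) 0 / theta3 0 τ := by
  unfold Spp
  have e : (fun v => Sp v τ) = fun v => (fun w => zeta2 w τ - zeta3 w τ) (v - 1 / 2) := by
    ext v
    simp only [Sp]
    rw [zeta1_eq, zeta4_eq, show v + 1 / 2 = v - 1 / 2 + 1 by ring, zeta2_add_one, zeta3_add_one]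
  rw [e, deriv_comp_sub_const (fun w => zeta2 w τ - zeta3 w τ), sub_self]
  have a := (deriv_logderiv (diff_theta2 hτ) h2).sub (deriv_logderiv (diff_theta3 hτ) h3)
  rw [deriv_even (f := fun v => theta2 v τ) (fun u => theta2_neg u τ), deriv_even (f := fun v => theta3 v τ) (fun u => theta3_neg u τ)] at a
  refine a.deriv.trans ?_
  field_simp
  try ring

/-- Identity (c6) of Appendix C:
S'(x,τ)·(℘₂(x,τ/2) − ℘₂(0,τ/2)) = S''(1/2,τ)·S'(x+1/2,τ). -/
theorem identity_c6 (τ x : ℂ) (hτ : 0 < τ.im)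
    (h1 : theta1 x τ ≠ 0) (h2 : theta4 x τ ≠ 0)
    (h3 : theta2 x (τ / 2) ≠ 0) (h4 : theta2 0 (τ / 2) ≠ 0)
    (h5 : theta1 (1 / 2) τ ≠ 0) (h6 : theta4 (1 / 2) τ ≠ 0)
    (h7 : theta1 (x + 1 / 2) τ ≠ 0) (h8 : theta4 (x + 1 / 2) τ ≠ 0) :
    Sp x τ * (wp2 x (τ / 2) - wp2 0 (τ / 2)) = Spp (1 / 2) τ * Sp (x + 1 / 2) τ := by
  have hT : 0 < (τ / 2).im := by simpa using hτ
  have e1 : (1 / 2 + 1 / 2 : ℂ) = 0 + 1 := by norm_num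
  have e2 : x + 1 / 2 + 1 / 2 = x + 1 := by ring
  rw [theta1_eq, neg_ne_zero] at h1 h5 h7
  rw [theta4_eq] at h2 h6 h8
  rw [e1, theta2_add_one, neg_ne_zero] at h5
  rw [e1, theta3_add_one] at h6
  rw [e2, theta2_add_one, neg_ne_zero] at h7
  rw [e2, theta3_add_one] at h8
  have hS1 : Sp x τ = deriv (fun v => auxF v τ) 0 * (auxF x τ + auxF (-x) τ) /
      (auxF 0 τ * (auxF x τ - auxF (-x) τ)) := by
    rw [Sp, zeta1_eq, zeta4_eq, zeta_sub _ hτ h1 h2, auxF_add_half, auxF_neg_add_half]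
    rw [show deriv (fun v => auxF v τ) 0 * (I * auxF x τ - -I * auxF (-x) τ) =
      I * (deriv (fun v => auxF v τ) 0 * (auxF x τ + auxF (-x) τ)) by ring,
      show auxF 0 τ * (I * auxF x τ + -I * auxF (-x) τ) =
      I * (auxF 0 τ * (auxF x τ - auxF (-x) τ)) by ring, mul_div_mul_left _ _ I_ne_zero]
  have hS2 : Sp (x + 1 / 2) τ = deriv (fun v => auxF v τ) 0 * (auxF x τ - auxF (-x) τ) /
      (auxF 0 τ * (auxF x τ + auxF (-x) τ)) := by
    rw [Sp, zeta1_eq, zeta4_eq, e2, zeta2_add_one, zeta3_add_one, zeta_sub _ hτ h7 h8]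
  have m1 := mul_ne_zero h1 h2
  rw [theta_mul _ hτ, auxF_add_half, auxF_neg_add_half,
    show auxF 0 τ * (I * auxF x τ + -I * auxF (-x) τ) =
      I * (auxF 0 τ * (auxF x τ - auxF (-x) τ)) by ring] at m1
  have hF0 : auxF 0 τ ≠ 0 := left_ne_zero_of_mul (right_ne_zero_of_mul m1)
  have hD : auxF x τ - auxF (-x) τ ≠ 0 := right_ne_zero_of_mul (right_ne_zero_of_mul m1)
  -- squares
  have hB : theta2 x (τ / 2) ^ 2 =
      theta2 (2 * x) τ * theta3 0 τ + theta3 (2 * x) τ * theta2 0 τ := by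
    have := id_II x 0 hτ
    simp only [add_zero, sub_zero, mul_zero] at this
    rw [sq, this]
  have hA : - (auxF x τ - auxF (-x) τ) ^ 2 =
      - theta2 (2 * x) τ * theta3 0 τ + theta3 (2 * x) τ * theta2 0 τ := by
    have := id_II (x + 1 / 2) 0 hτ
    simp only [add_zero, sub_zero, mul_zero] at this
    rw [id_E _ hτ, auxF_add_half, auxF_neg_add_half, show 2 * (x + 1 / 2) = 2 * x + 1 by ring,
      theta2_add_one, theta3_add_one] at this
    rw [← this]
    linear_combination -(auxF x τ - auxF (-x) τ) ^ 2 * I_sq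
  have hB0 : theta2 0 (τ / 2) ^ 2 = 2 * (theta2 0 τ * theta3 0 τ) := by
    have := id_II 0 0 hτ
    simp only [add_zero, sub_zero, mul_zero] at this
    rw [sq, this]; ring
  have W := deriv_II _ _ _ (diff_theta2 hτ) (diff_theta3 hτ) (diff_theta2 hT)
    (fun x y => id_II x y hτ)
  have w1 : wp2 x (τ / 2) = _ := congrArg Neg.neg (deriv_logderiv (diff_theta2 hT) h3).deriv
  have w2 : wp2 0 (τ / 2) = _ := congrArg Neg.neg (deriv_logderiv (diff_theta2 hT) h4).deriv
  rw [W] at w1 w2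
  rw [hB0, mul_zero] at w2
  rw [w1, w2, hS1, hS2, Spp_half hτ h5 h6]
  have hE := id_E x hτ
  rw [← hE]
  generalize auxF x τ - auxF (-x) τ = D at *
  generalize theta2 x (τ / 2) = E at *
  generalize deriv (fun v => auxF v τ) 0 = c at *
  generalize deriv (deriv fun v => theta2 v τ) 0 = p at *
  generalize deriv (deriv fun v => theta3 v τ) 0 = q at *
  generalize theta2 (2 * x) τ = X at *
  generalize theta3 (2 * x) τ = Y at *
  generalize theta2 0 τ = a at *
  generalize theta3 0 τ = b at *
  generalize auxF 0 τ = F0 at *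
  have hX : X = (E ^ 2 + D ^ 2) / (2 * b) := by
    field_simp
    linear_combination -hB + hA
  have hY : Y = (E ^ 2 - D ^ 2) / (2 * a) := by
    field_simp
    linear_combination -hB - hA
  rw [hX, hY]
  field_simp
  ring
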